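/- arXiv:math/0306065 — 7 statements merged into one kernel-verified Lean document; each statement's English description precedes it below -/
import Mathlib

section
/- Let J be a finite multiset of pairs (r, v) of positive integers with r ≥ 2 and 2v ≤ r. Then Σ_{(r,v)∈J} v(r−v)/(2r) < 1 (in ℚ) if and only if J is one of the following: (i) ∅; (ii) {(r,1)} for some r ≥ 2; (iii) {(r,2)} for some r ≥ 4; (iv) {(6,3)}, {(7,3)} or {(8,3)}; (v) {(r₁,1),(r₂,1)} for some r₁, r₂ ≥ 2; (vi) {(4,2),(r,1)} for some r ≥ 2; (vii) {(5,2),(2,1)}, {(5,2),(3,1)} or {(5,2),(4,1)}; (viii) {(6,2),(2,1)}; (ix) {(7,2),(2,1)}; (x) {(2,1),(2,1),(r,1)} for some r ≥ 2; (xi) {(2,1),(3,1),(3,1)}, {(2,1),(3,1),(4,1)} or {(2,1),(3,1),(5,1)}. Moreover, in these cases the value 2·(1 − Σ_{(r,v)∈J} v(r−v)/(2r)) equals, respectively: (i) 2; (ii) 1 + 1/r; (iii) 4/r; (iv) 1/2, 2/7, 1/8; (v) 1/r₁ + 1/r₂; (vi) 1/r; (vii) 3/10, 2/15, 1/20; (viii)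 1/6; (ix) 1/14; (x) 1/r; (xi) 1/6, 1/12, 1/30. -/
/-!
Each pair contributes `v (r - v) / (2 r)`, and `2 v ≤ r` makes this at least `v / 4`. Hence a sum
below `1` forces the total of the `v`s to be at most `3`, leaving only the patterns
`∅, {1}, {2}, {3}, {1,1}, {1,2}, {1,1,1}` for them. For fixed `v ≤ 3` the contribution is
`v / 2 - v² / (2 r)`, so the condition becomes a bound on sums of unit fractions: nothing for
`∅, {1}, {2}, {1,1}`, `r < 9` for `{3}`, `(r - 4) (s - 1) < 4` for `{2,1}`
(`two_one_indices`), and `1/a + 1/b + 1/c > 1` for `{1,1,1}` (`platonic_indices`).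
-/

/-- The contribution of the pair `p = (r, v)` to the Riemann–Roch sum. -/
def contrib (p : ℕ × ℕ) : ℚ := ((p.2 : ℚ) * ((p.1 : ℚ) - (p.2 : ℚ))) / (2 * (p.1 : ℚ))

/-- Since `r - v ≥ r / 2`, a pair contributes at least a quarter of its `v`. -/
lemma contrib_ge {r v : ℕ} (hr : 2 ≤ r) (hvr : 2 * v ≤ r) : (v : ℚ) / 4 ≤ contrib (r, v) := by
  have h0 : (0 : ℚ) < r := by exact_mod_cast (by omega : 0 < r)
  have h1 : 2 * (v : ℚ) ≤ r := by exact_mod_cast hvr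
  have h2 : (0 : ℚ) ≤ v := by positivity
  simp only [contrib]
  rw [div_le_div_iff₀ (by norm_num) (by positivity)]
  nlinarith [mul_nonneg h2 (sub_nonneg.2 h1)]

lemma contrib_eq {r : ℕ} (hr : 2 ≤ r) (v : ℕ) :
    contrib (r, v) = v / 2 - v ^ 2 / 2 * (1 / (r : ℚ)) := by
  have h0 : (r : ℚ) ≠ 0 := by exact_mod_cast (by omega : r ≠ 0)
  simp only [contrib]
  field_simp

lemma two_one_indices {a s : ℕ} (ha : 4 ≤ a) (hs : 2 ≤ s)
    (h : contrib (a, 2) + contrib (s, 1) < 1) :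
    a = 4 ∨ (a = 5 ∧ (s = 2 ∨ s = 3 ∨ s = 4)) ∨ (a = 6 ∧ s = 2) ∨ (a = 7 ∧ s = 2) := by
  have hlt : a * s < 4 * s + a := by
    have ha0 : (0 : ℚ) < a := by exact_mod_cast (by omega : 0 < a)
    have hs0 : (0 : ℚ) < s := by exact_mod_cast (by omega : 0 < s)
    rw [contrib_eq (by omega), contrib_eq hs] at h
    have h' := mul_lt_mul_of_pos_right h (mul_pos ha0 hs0)
    field_simp at h'
    have : (a : ℚ) * s < 4 * s + a := by push_cast at h'; nlinarith
    exact_mod_cast this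
  have : a < 8 := by nlinarith
  interval_cases a <;> omega

/-- The sorted solutions of `1/a + 1/b + 1/c > 1` in integers at least `2`. -/
lemma platonic_indices {a b c : ℕ} (ha : 2 ≤ a) (hab : a ≤ b) (hbc : b ≤ c)
    (h : contrib (a, 1) + contrib (b, 1) + contrib (c, 1) < 1) :
    a = 2 ∧ (b = 2 ∨ (b = 3 ∧ (c = 3 ∨ c = 4 ∨ c = 5))) := by
  have hlt : a * b * c < b * c + a * c + a * b := by
    have ha0 : (0 : ℚ) < a := by exact_mod_cast (by omega : 0 < a)
    have hb0 : (0 : ℚ) < b := by exact_mod_cast (by omega : 0 < b)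
    have hc0 : (0 : ℚ) < c := by exact_mod_cast (by omega : 0 < c)
    rw [contrib_eq ha, contrib_eq (by omega), contrib_eq (by omega)] at h
    have h' := mul_lt_mul_of_pos_right h (mul_pos (mul_pos ha0 hb0) hc0)
    field_simp at h'
    have : (a : ℚ) * b * c < b * c + a * c + a * b := by push_cast at h'; nlinarith
    exact_mod_cast this
  have ha2 : a < 3 := by
    by_contra! hc
    have h1 : 3 * (b * c) ≤ a * (b * c) := Nat.mul_le_mul_right _ hc
    have h2 : a * c ≤ b * c := Nat.mul_le_mul_right _ hab
    have h3 : a * b ≤ b * c := by rw [mul_comm b c]; exact Nat.mul_le_mul_right _ (hab.trans hbc)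
    have h4 : a * b * c = a * (b * c) := mul_assoc _ _ _
    omega
  obtain rfl : a = 2 := by omega
  have hb : b < 4 := by
    by_contra! hb4
    have := Nat.mul_le_mul_right c hb4
    have h4 : 2 * b * c = 2 * (b * c) := mul_assoc _ _ _
    omega
  interval_cases b <;> omega

/-- Four pairs already contribute at least `4 · (1 / 4)`. -/
lemma card_lt_four {J : Multiset (ℕ × ℕ)} (hJ : ∀ p ∈ J, 2 ≤ p.1 ∧ 1 ≤ p.2 ∧ 2 * p.2 ≤ p.1)
    (h : (J.map contrib).sum < 1) : J.card < 4 := by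
  have h1 : (J.map contrib).card • (1 / 4 : ℚ) ≤ (J.map contrib).sum := by
    refine Multiset.card_nsmul_le_sum fun x hx => ?_
    obtain ⟨p, hp, rfl⟩ := Multiset.mem_map.1 hx
    obtain ⟨hr, hv, hvr⟩ := hJ p hp
    have h2 : (1 : ℚ) ≤ p.2 := by exact_mod_cast hv
    have h3 := contrib_ge hr hvr
    linarith
  rw [Multiset.card_map, nsmul_eq_mul] at h1
  have : (J.card : ℚ) < 4 := by linarith
  exact_mod_cast this

/-- The list of admissible shapes. -/
def Shape (J : Multiset (ℕ × ℕ)) : Prop :=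
      (J = 0 ∨
       (∃ r : ℕ, 2 ≤ r ∧ J = {(r, 1)}) ∨
       (∃ r : ℕ, 4 ≤ r ∧ J = {(r, 2)}) ∨
       J = {(6, 3)} ∨ J = {(7, 3)} ∨ J = {(8, 3)} ∨
       (∃ r₁ r₂ : ℕ, 2 ≤ r₁ ∧ 2 ≤ r₂ ∧ J = {(r₁, 1), (r₂, 1)}) ∨
       (∃ r : ℕ, 2 ≤ r ∧ J = {(4, 2), (r, 1)}) ∨
       J = {(5, 2), (2, 1)} ∨ J = {(5, 2), (3, 1)} ∨ J = {(5, 2), (4, 1)} ∨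
       J = {(6, 2), (2, 1)} ∨
       J = {(7, 2), (2, 1)} ∨
       (∃ r : ℕ, 2 ≤ r ∧ J = {(2, 1), (2, 1), (r, 1)}) ∨
       J = {(2, 1), (3, 1), (3, 1)} ∨ J = {(2, 1), (3, 1), (4, 1)} ∨
       J = {(2, 1), (3, 1), (5, 1)})

/-- A triple of pairs with `v = 1`, indices sorted. -/
lemma shape_triple {a b c : ℕ} (ha : 2 ≤ a) (hab : a ≤ b) (hbc : b ≤ c)
    (h : contrib (a, 1) + contrib (b, 1) + contrib (c, 1) < 1) :
    Shape {(a, 1), (b, 1), (c, 1)} := by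
  obtain ⟨rfl, rfl | ⟨rfl, rfl | rfl | rfl⟩⟩ := platonic_indices ha hab hbc h
  · iterate 13 right
    exact Or.inl ⟨c, hbc, rfl⟩
  all_goals simp [Shape]

lemma shape_two_one {a s : ℕ} (ha : 4 ≤ a) (hs : 2 ≤ s)
    (h : contrib (a, 2) + contrib (s, 1) < 1) : Shape {(a, 2), (s, 1)} := by
  obtain rfl | ⟨rfl, rfl | rfl | rfl⟩ | ⟨rfl, rfl⟩ | ⟨rfl, rfl⟩ := two_one_indices ha hs h
  · iterate 7 right
    exact Or.inl ⟨s, hs, rfl⟩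
  all_goals simp [Shape]

lemma triple_swap₁₂ (x y z : ℕ × ℕ) : ({x, y, z} : Multiset (ℕ × ℕ)) = {y, x, z} :=
  Multiset.cons_swap x y {z}

lemma triple_swap₂₃ (x y z : ℕ × ℕ) : ({x, y, z} : Multiset (ℕ × ℕ)) = {x, z, y} :=
  congrArg (x ::ₘ ·) (Multiset.pair_comm y z)

lemma shape_of_sum_lt {J : Multiset (ℕ × ℕ)}
    (hJ : ∀ p ∈ J, 2 ≤ p.1 ∧ 1 ≤ p.2 ∧ 2 * p.2 ≤ p.1)
    (h : (J.map contrib).sum < 1) : Shape J := by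
  have hcard := card_lt_four hJ h
  obtain h0 | h1 | h2 | h3 : J.card = 0 ∨ J.card = 1 ∨ J.card = 2 ∨ J.card = 3 := by omega
  · exact Or.inl (Multiset.card_eq_zero.1 h0)
  · obtain ⟨⟨r, v⟩, rfl⟩ := Multiset.card_eq_one.1 h1
    obtain ⟨hr, hv, hvr⟩ := hJ (r, v) (by simp)
    simp only [Multiset.map_singleton, Multiset.sum_singleton] at h hr hv hvr
    have hv4 : v < 4 := by
      have := contrib_ge hr hvr
      have : (v : ℚ) < 4 := by linarith
      exact_mod_cast this
    interval_cases v
    · exact Or.inr (Or.inl ⟨r, hr, rfl⟩)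
    · exact Or.inr (Or.inr (Or.inl ⟨r, by omega, rfl⟩))
    · have hr9 : r < 9 := by
        have h0 : (0 : ℚ) < r := by exact_mod_cast (by omega : 0 < r)
        simp only [contrib] at h
        rw [div_lt_one (by positivity)] at h
        have : (r : ℚ) < 9 := by push_cast at h; linarith
        exact_mod_cast this
      have hr6 : 6 ≤ r := by omega
      interval_cases r <;> simp [Shape]
  · obtain ⟨⟨r, v⟩, ⟨s, w⟩, rfl⟩ := Multiset.card_eq_two.1 h2
    obtain ⟨hr, hv, hvr⟩ := hJ (r, v) (by simp)
    obtain ⟨hs, hw, hws⟩ := hJ (s, w) (by simp)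
    simp only [Multiset.insert_eq_cons, Multiset.map_cons, Multiset.map_singleton,
      Multiset.sum_cons, Multiset.sum_singleton] at h hr hv hvr hs hw hws
    have hvw : v + w < 4 := by
      have := contrib_ge hr hvr
      have := contrib_ge hs hws
      have : (v : ℚ) + w < 4 := by linarith
      exact_mod_cast this
    obtain ⟨rfl, rfl⟩ | ⟨rfl, rfl⟩ | ⟨rfl, rfl⟩ :
        (v = 1 ∧ w = 1) ∨ (v = 1 ∧ w = 2) ∨ (v = 2 ∧ w = 1) := by omega
    · iterate 6 right
      exact Or.inl ⟨r, s, hr, hs, rfl⟩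
    · rw [Multiset.pair_comm]
      exact shape_two_one (by omega) hr (by linarith)
    · exact shape_two_one (by omega) hs h
  · obtain ⟨⟨a, u⟩, ⟨b, v⟩, ⟨c, w⟩, rfl⟩ := Multiset.card_eq_three.1 h3
    obtain ⟨ha, hu, hua⟩ := hJ (a, u) (by simp)
    obtain ⟨hb, hv, hvb⟩ := hJ (b, v) (by simp)
    obtain ⟨hc, hw, hwc⟩ := hJ (c, w) (by simp)
    simp only [Multiset.insert_eq_cons, Multiset.map_cons, Multiset.map_singleton,
      Multiset.sum_cons, Multiset.sum_singleton] at h ha hu hua hb hv hvb hc hw hwc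
    have huvw : u + v + w < 4 := by
      have := contrib_ge ha hua
      have := contrib_ge hb hvb
      have := contrib_ge hc hwc
      have : (u : ℚ) + v + w < 4 := by linarith
      exact_mod_cast this
    obtain ⟨rfl, rfl, rfl⟩ : u = 1 ∧ v = 1 ∧ w = 1 := by omega
    rcases le_total a b with hab | hab <;> rcases le_total b c with hbc | hbc <;>
      rcases le_total a c with hac | hac
    · exact shape_triple ha hab hbc (by linarith)
    · exact shape_triple ha hab hbc (by linarith)
    · rw [triple_swap₂₃]
      exact shape_triple ha hac hbc (by linarith)
    · rw [triple_swap₂₃, triple_swap₁₂]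
      exact shape_triple hc hac hab (by linarith)
    · rw [triple_swap₁₂]
      exact shape_triple hb hab hac (by linarith)
    · rw [triple_swap₁₂, triple_swap₂₃]
      exact shape_triple hb hbc hac (by linarith)
    · rw [triple_swap₁₂, triple_swap₂₃, triple_swap₁₂]
      exact shape_triple hc hbc hab (by linarith)
    · rw [triple_swap₁₂, triple_swap₂₃, triple_swap₁₂]
      exact shape_triple hc hbc hab (by linarith)


/-- Numerical content of the classification theorem (Theorem 2.3, Table of types
No 1–17): for a finite multiset `J` of pairs `(r,v)` with `r ≥ 2`, `v ≥ 1` and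
`2v ≤ r`, the sum `S = Σ_{(r,v)∈J} v(r−v)/(2r)` is `< 1` exactly when `J` has one
of the listed shapes, and in each case `2(1 − S)` takes the listed value. -/
theorem stmt_0 (J : Multiset (ℕ × ℕ))
    (hJ : ∀ p ∈ J, 2 ≤ p.1 ∧ 1 ≤ p.2 ∧ 2 * p.2 ≤ p.1)
    (S : ℚ)
    (hS : S = (J.map (fun p : ℕ × ℕ =>
      ((p.2 : ℚ) * ((p.1 : ℚ) - (p.2 : ℚ))) / (2 * (p.1 : ℚ)))).sum) :
    (S < 1 ↔
      (J = 0 ∨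
       (∃ r : ℕ, 2 ≤ r ∧ J = {(r, 1)}) ∨
       (∃ r : ℕ, 4 ≤ r ∧ J = {(r, 2)}) ∨
       J = {(6, 3)} ∨ J = {(7, 3)} ∨ J = {(8, 3)} ∨
       (∃ r₁ r₂ : ℕ, 2 ≤ r₁ ∧ 2 ≤ r₂ ∧ J = {(r₁, 1), (r₂, 1)}) ∨
       (∃ r : ℕ, 2 ≤ r ∧ J = {(4, 2), (r, 1)}) ∨
       J = {(5, 2), (2, 1)} ∨ J = {(5, 2), (3, 1)} ∨ J = {(5, 2), (4, 1)} ∨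
       J = {(6, 2), (2, 1)} ∨
       J = {(7, 2), (2, 1)} ∨
       (∃ r : ℕ, 2 ≤ r ∧ J = {(2, 1), (2, 1), (r, 1)}) ∨
       J = {(2, 1), (3, 1), (3, 1)} ∨ J = {(2, 1), (3, 1), (4, 1)} ∨
       J = {(2, 1), (3, 1), (5, 1)})) ∧
    ((J = 0 → 2 * (1 - S) = 2) ∧
     (∀ r : ℕ, 2 ≤ r → J = {(r, 1)} → 2 * (1 - S) = 1 + 1 / (r : ℚ)) ∧
     (∀ r : ℕ, 4 ≤ r → J = {(r, 2)} → 2 * (1 - S) = 4 / (r : ℚ)) ∧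
     (J = {(6, 3)} → 2 * (1 - S) = 1 / 2) ∧
     (J = {(7, 3)} → 2 * (1 - S) = 2 / 7) ∧
     (J = {(8, 3)} → 2 * (1 - S) = 1 / 8) ∧
     (∀ r₁ r₂ : ℕ, 2 ≤ r₁ → 2 ≤ r₂ → J = {(r₁, 1), (r₂, 1)} →
        2 * (1 - S) = 1 / (r₁ : ℚ) + 1 / (r₂ : ℚ)) ∧
     (∀ r : ℕ, 2 ≤ r → J = {(4, 2), (r, 1)} → 2 * (1 - S) = 1 / (r : ℚ)) ∧
     (J = {(5, 2), (2, 1)} → 2 * (1 - S) = 3 / 10) ∧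
     (J = {(5, 2), (3, 1)} → 2 * (1 - S) = 2 / 15) ∧
     (J = {(5, 2), (4, 1)} → 2 * (1 - S) = 1 / 20) ∧
     (J = {(6, 2), (2, 1)} → 2 * (1 - S) = 1 / 6) ∧
     (J = {(7, 2), (2, 1)} → 2 * (1 - S) = 1 / 14) ∧
     (∀ r : ℕ, 2 ≤ r → J = {(2, 1), (2, 1), (r, 1)} → 2 * (1 - S) = 1 / (r : ℚ)) ∧
     (J = {(2, 1), (3, 1), (3, 1)} → 2 * (1 - S) = 1 / 6) ∧
     (J = {(2, 1), (3, 1), (4, 1)} → 2 * (1 - S) = 1 / 12) ∧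
     (J = {(2, 1), (3, 1), (5, 1)} → 2 * (1 - S) = 1 / 30)) := by
  change S = (J.map contrib).sum at hS
  have hpos : ∀ r : ℕ, 2 ≤ r → (0 : ℚ) < 1 / r := fun r hr =>
    one_div_pos.2 (by exact_mod_cast (by omega : 0 < r))
  refine ⟨⟨fun h => shape_of_sum_lt hJ (hS ▸ h), ?_⟩, ?_⟩
  · rintro (rfl | ⟨r, hr, rfl⟩ | ⟨r, hr, rfl⟩ | rfl | rfl | rfl | ⟨r, s, hr, hs, rfl⟩ |
      ⟨r, hr, rfl⟩ | rfl | rfl | rfl | rfl | rfl | ⟨r, hr, rfl⟩ | rfl | rfl | rfl) <;>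
    simp only [Multiset.insert_eq_cons, Multiset.map_cons, Multiset.map_singleton,
      Multiset.map_zero, Multiset.sum_zero, Multiset.sum_cons, Multiset.sum_singleton] at hS
    · norm_num [hS]
    · rw [hS, contrib_eq hr]
      have := hpos r hr
      push_cast
      linarith
    · rw [hS, contrib_eq (by omega)]
      have := hpos r (by omega)
      push_cast
      linarith
    · norm_num [hS, contrib]
    · norm_num [hS, contrib]
    · norm_num [hS, contrib]
    · rw [hS, contrib_eq hr, contrib_eq hs]
      have := hpos r hr
      have := hpos s hs
      push_cast
      linarith
    · rw [hS, contrib_eq (r := 4) (by omega), contrib_eq hr]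
      have := hpos r hr
      push_cast
      linarith
    iterate 5 norm_num [hS, contrib]
    · rw [hS, contrib_eq (r := 2) (by omega), contrib_eq hr]
      have := hpos r hr
      push_cast
      linarith
    all_goals norm_num [hS, contrib]
  · refine ⟨?_, ?_, ?_, ?_, ?_, ?_, ?_, ?_, ?_, ?_, ?_, ?_, ?_, ?_, ?_, ?_, ?_⟩ <;> intros <;>
      subst J <;>
    simp only [Multiset.insert_eq_cons, Multiset.map_cons, Multiset.map_singleton,
      Multiset.map_zero, Multiset.sum_zero, Multiset.sum_cons, Multiset.sum_singleton] at hS <;>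
    rw [hS] <;>
    repeat' rw [contrib_eq (by omega)]
    all_goals (push_cast; ring)
end

section
/- Let a, n, r₁, r₂ be positive integers and b, b′ integers satisfying: (a) b·b′ ≡ 1 (mod n), a ≡ b·r₁ (mod n), and r₁ + r₂ ≡ 0 (mod a·n); and (b) the integer (a − b·r₁)/n is coprime to r₁. Then the integer (a + b·r₂)/n is coprime to r₂, and the integers (r₁ − b′·a)/n and (r₂ + b′·a)/n are both coprime to a. (Here all four displayed fractions are indeed integers: n divides a − b·r₁ by hypothesis, and then n also divides a + b·r₂, r₁ − b′·a and r₂ + b′·a.) -/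
/-!
Write `a - b r₁ = n k`, `r₁ + r₂ = a n t` and `b b' = 1 + n s`. The other three fractions are then
`m = k + a b t`, `p = -(s r₁ + b' k)` and `q = a t - p`. Since `k` and `r₁` generate the unit ideal,
it suffices to write both of them as integer combinations of the pair claimed to be coprime.

* For `m` and `r₂`: `a = n m - b r₂`, hence `k = m - a b t` and `r₁ = a n t - r₂` lie in `(m, r₂)`.
* For `p` and `a`: the system `s r₁ + b' k = -p`, `b r₁ + n k = a` has determinant
  `s n - b b' = -1`, so it can be inverted: `r₁ = b' a + n p` and `k = -b p - s a`.
* For `q` and `a`: `q ≡ -p` modulo `a`.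
-/

/-- Lemma 6.5 (lem:final): arithmetic verification for weighted blow-ups of cA/n points.
If `b·b′ ≡ 1 (mod n)`, `a ≡ b·r₁ (mod n)`, `r₁ + r₂ ≡ 0 (mod a·n)` and `(a − b·r₁)/n`
is coprime to `r₁`, then `(a + b·r₂)/n` is coprime to `r₂` and `(r₁ − b′·a)/n`,
`(r₂ + b′·a)/n` are coprime to `a`; moreover all displayed fractions are integers. -/
theorem stmt_1 (a n r₁ r₂ b b' : ℤ)
    (ha : 0 < a) (hn : 0 < n) (hr₁ : 0 < r₁) (hr₂ : 0 < r₂)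
    (h1 : b * b' ≡ 1 [ZMOD n])
    (h2 : a ≡ b * r₁ [ZMOD n])
    (h3 : r₁ + r₂ ≡ 0 [ZMOD a * n])
    (h4 : IsCoprime ((a - b * r₁) / n) r₁) :
    n ∣ (a - b * r₁) ∧ n ∣ (a + b * r₂) ∧ n ∣ (r₁ - b' * a) ∧ n ∣ (r₂ + b' * a) ∧
    IsCoprime ((a + b * r₂) / n) r₂ ∧
    IsCoprime ((r₁ - b' * a) / n) a ∧
    IsCoprime ((r₂ + b' * a) / n) a := by
  obtain ⟨k, hk⟩ : n ∣ a - b * r₁ := h2.symm.dvd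
  obtain ⟨t, ht⟩ : a * n ∣ r₁ + r₂ := Int.modEq_zero_iff_dvd.mp h3
  obtain ⟨s, hs⟩ : n ∣ b * b' - 1 := h1.symm.dvd
  have hn0 : n ≠ 0 := hn.ne'
  have hm : a + b * r₂ = n * (k + a * b * t) := by linear_combination hk + b * ht
  have hp : r₁ - b' * a = n * (-(s * r₁ + b' * k)) := by
    linear_combination -b' * hk - r₁ * hs
  have hq : r₂ + b' * a = n * (a * t - -(s * r₁ + b' * k)) := by
    linear_combination ht - hp
  rw [hk, Int.mul_ediv_cancel_left _ hn0] at h4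
  rw [hk, hm, hp, hq]
  simp only [Int.mul_ediv_cancel_left _ hn0]
  obtain ⟨u, v, huv⟩ := h4
  have hkm : k = (k + a * b * t) * (1 - n * b * t) + r₂ * (b ^ 2 * t) := by
    linear_combination -b * t * hm
  have hrm : r₁ = (k + a * b * t) * (n ^ 2 * t) - r₂ * (b * n * t + 1) := by
    linear_combination ht + n * t * hm
  have hrp : r₁ = b' * a + n * (-(s * r₁ + b' * k)) := by linear_combination hp
  have hkp : k = -b * (-(s * r₁ + b' * k)) - s * a := by
    linear_combination s * hk - k * hs
  have hpa : IsCoprime (-(s * r₁ + b' * k)) a :=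
    ⟨-u * b + v * n, -u * s + v * b', by linear_combination huv - u * hkp - v * hrp⟩
  refine ⟨dvd_mul_right _ _, dvd_mul_right _ _, dvd_mul_right _ _, dvd_mul_right _ _,
    ⟨u * (1 - n * b * t) + v * (n ^ 2 * t), u * (b ^ 2 * t) - v * (b * n * t + 1), ?_⟩, hpa, ?_⟩
  · linear_combination huv - u * hkm - v * hrm
  · obtain ⟨x, y, hxy⟩ := hpa
    exact ⟨-x, y + x * t, by linear_combination hxy⟩
end

section
/- Let r ≥ 2 and b be coprime positive integers. For an integer k ≥ 1 define A(k) := −k(r² − 1)/(12r) + Σ_{l=1}^{k−1} (lb mod r)·(r − (lb mod r))/(2r) ∈ ℚ, where (x mod r) denotes the representative of x in {0, …, r−1}. Then for every integer k with 1 ≤ k ≤ r − 1: A(k) + A(r − k) = −(kb mod r)·(r − (kb mod r))/(2r). -/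
/-!
Write `t l = (l b mod r)(r − (l b mod r))/(2r)`. Replacing `l` by `r − l` replaces `l b mod r` by its
negative modulo `r`, so `t (r − l) = t l`, and the sum in `A (r − k)` is `∑_{k < l < r} t l`.
Together with the sum in `A k` this is `∑_{0 < l < r} t l − t k`. As `b` is invertible modulo `r`,
multiplication by `b` permutes the residues, hence `∑_{0 < l < r} t l = ∑_{i < r} i (r − i)/(2r)
= (r² − 1)/12`, which cancels the linear terms `−(k + (r − k))(r² − 1)/(12r)`.
-/

lemma sum_range_mul_sub (s : ℚ) (n : ℕ) :
    ∑ i ∈ Finset.range n, (i : ℚ) * (s - i) =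
      s * (n * (n - 1) / 2) - (n - 1) * n * (2 * n - 1) / 6 := by
  induction n with
  | zero => simp
  | succ n ih => rw [Finset.sum_range_succ, ih]; push_cast; ring

/-- Multiplication by a unit modulo `r` permutes the residues modulo `r`. -/
lemma sum_range_mul_mod (r b : ℕ) (hr : 0 < r) (hco : Nat.Coprime r b) (g : ℕ → ℚ) :
    ∑ l ∈ Finset.range r, g (l * b % r) = ∑ i ∈ Finset.range r, g i := by
  have hmaps : Set.MapsTo (fun l => l * b % r) (Finset.range r : Set ℕ) (Finset.range r) := by
    intro l _
    simpa using Nat.mod_lt _ hr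
  have hinj : Set.InjOn (fun l => l * b % r) (Finset.range r : Set ℕ) := by
    intro x hx y hy hxy
    simp only [Finset.coe_range, Set.mem_Iio] at hx hy
    have hmod : x ≡ y [MOD r] := Nat.ModEq.cancel_right_of_coprime hco hxy
    exact hmod.eq_of_lt_of_lt hx hy
  exact Finset.sum_nbij (fun l => l * b % r) hmaps hinj
    (Finset.surjOn_of_injOn_of_card_le _ hmaps hinj le_rfl) (fun _ _ => rfl)

/-- The product `x (r − x)` takes the same value at the residues of `l b` and `−l b`. -/
lemma mod_mul_sub_mod_reflect (r b l : ℕ) (hr : 0 < r) (hl : l ≤ r) :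
    (((r - l) * b % r : ℕ) : ℚ) * ((r : ℚ) - (((r - l) * b % r : ℕ) : ℚ)) =
      ((l * b % r : ℕ) : ℚ) * ((r : ℚ) - ((l * b % r : ℕ) : ℚ)) := by
  have hdvd : r ∣ (r - l) * b % r + l * b % r := by
    rw [Nat.dvd_iff_mod_eq_zero, ← Nat.add_mod, ← Nat.add_mul, Nat.sub_add_cancel hl,
      Nat.mul_mod_right]
  have hx := Nat.mod_lt ((r - l) * b) hr
  have hy := Nat.mod_lt (l * b) hr
  generalize (r - l) * b % r = x at *
  generalize l * b % r = y at *
  obtain ⟨c, hc⟩ := hdvd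
  -- Two residues below `r` with sum divisible by `r` add up to `0` or to `r`.
  have hc2 : c < 2 := by
    by_contra! h
    have := Nat.mul_le_mul_left r h
    omega
  interval_cases c
  · obtain ⟨rfl, rfl⟩ : x = 0 ∧ y = 0 := by omega
    rfl
  · have h : (x : ℚ) + y = r := by exact_mod_cast (by omega : x + y = r)
    rw [← h]
    ring

/-- Equation (2.5) of the paper: the local Riemann–Roch contribution
`A(k) = −k(r²−1)/(12r) + Σ_{l=1}^{k−1} (lb mod r)(r − (lb mod r))/(2r)` of a
fictitious singularity of type `(1/r)(1,−1,b)` satisfies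
`A(k) + A(r − k) = −(kb mod r)(r − (kb mod r))/(2r)` for `1 ≤ k ≤ r − 1`. -/
theorem stmt_3 (r b : ℕ) (hr : 2 ≤ r) (hb : 0 < b) (hco : Nat.Coprime r b)
    (A : ℕ → ℚ)
    (hA : ∀ k : ℕ, 1 ≤ k → A k =
      -(k : ℚ) * ((r : ℚ) ^ 2 - 1) / (12 * (r : ℚ)) +
        ∑ l ∈ Finset.Ico 1 k,
          ((l * b % r : ℕ) : ℚ) * ((r : ℚ) - ((l * b % r : ℕ) : ℚ)) / (2 * (r : ℚ))) :
    ∀ k : ℕ, 1 ≤ k → k ≤ r - 1 →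
      A k + A (r - k) =
        -(((k * b % r : ℕ) : ℚ) * ((r : ℚ) - ((k * b % r : ℕ) : ℚ))) / (2 * (r : ℚ)) := by
  intro k hk1 hk
  have hr0 : (r : ℚ) ≠ 0 := by positivity
  rw [hA k hk1, hA (r - k) (by omega)]
  set t : ℕ → ℚ := fun l =>
    ((l * b % r : ℕ) : ℚ) * ((r : ℚ) - ((l * b % r : ℕ) : ℚ)) / (2 * (r : ℚ)) with ht
  have hrefl : ∑ l ∈ Finset.Ico 1 (r - k), t l = ∑ l ∈ Finset.Ico (k + 1) r, t l := by
    have h := Finset.sum_Ico_reflect t 1 (show r - k ≤ r + 1 by omega)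
    rw [show r + 1 - (r - k) = k + 1 by omega, Nat.add_sub_cancel] at h
    rw [← h]
    refine Finset.sum_congr rfl fun l hl => ?_
    rw [Finset.mem_Ico] at hl
    simp only [ht]
    rw [mod_mul_sub_mod_reflect r b l (by omega) (by omega)]
  have htotal : ∑ l ∈ Finset.range r, t l = ((r : ℚ) ^ 2 - 1) / 12 := by
    have h := sum_range_mul_mod r b (by omega) hco
      (fun i => (i : ℚ) * ((r : ℚ) - i) / (2 * (r : ℚ)))
    simp only [ht]
    rw [h, ← Finset.sum_div, sum_range_mul_sub]
    field_simp
    ring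
  have hsplit : ∑ l ∈ Finset.range r, t l =
      ∑ l ∈ Finset.Ico 1 k, t l + t k + ∑ l ∈ Finset.Ico (k + 1) r, t l := by
    have ht0 : t 0 = 0 := by simp [ht]
    rw [Finset.range_eq_Ico, Finset.sum_eq_sum_Ico_succ_bot (by omega), ht0, zero_add, zero_add,
      ← Finset.sum_Ico_consecutive t hk1 (by omega : k ≤ r),
      Finset.sum_eq_sum_Ico_succ_bot (by omega : k < r), add_assoc]
  have hlin : -(k : ℚ) * ((r : ℚ) ^ 2 - 1) / (12 * r) +
      -((r - k : ℕ) : ℚ) * ((r : ℚ) ^ 2 - 1) / (12 * r) = -(((r : ℚ) ^ 2 - 1) / 12) := by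
    rw [Nat.cast_sub (by omega)]
    field_simp
    ring
  have hk' : -(((k * b % r : ℕ) : ℚ) * ((r : ℚ) - ((k * b % r : ℕ) : ℚ))) / (2 * (r : ℚ))
      = -t k := by
    simp only [ht, neg_div]
  rw [hk', hrefl]
  linarith
end

section
/- Let a and r₁ be positive integers with a ≡ r₁ (mod 2), let k ∈ {2, 4}, set r₂ := r₁ + k, and let j ∈ {0, 1}. For an integer m, let M^[j](m) denote the number of quadruples (l₁, l₂, l₃, l₄) of non-negative integers satisfying r₂·l₁ + r₁·l₂ + a·l₃ + 2·l₄ = m, l₁·l₂ = 0, and l₁ + l₂ + l₃ ≡ j (mod 2) (so M^[j](m) = 0 for m < 0). Then for every integer m ≥ 0 with m ≡ j·a (mod 2): M^[j](m) − M^[1−j](m − a) = 1 − j + ⌊(m + j·r₁)/(2·r₁)⌋ + ⌊(m + j·r₂)/(2·r₂)⌋. -/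
/-!
Split the quadruples according to whether `l₃ = 0`. Lowering `l₃` by one identifies those with
`l₃ > 0` with the quadruples counted by `M^[1-j](m - a)` (`ncard_sol`), so the difference in question
counts the quadruples with `l₃ = 0`. For these, `l₁ l₂ = 0` leaves two arithmetic progressions,
`l₁ = 2t + j, l₂ = 0` and `l₁ = 0, l₂ = 2t + 2 - j`, the second avoiding the point `l₁ = l₂ = 0`
already in the first when `j = 0`. Since `r₁ ≡ r₂ ≡ a` and `m ≡ j a (mod 2)`, the number `l₄` exists
exactly when `r₂ l₁ + r₁ l₂ ≤ m`, so each progression is counted by one floor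
(`ncard_slice`).
-/

/-- The set of quadruples counted by `M^[j](m)`. -/
def sol (a r₁ r₂ j : ℕ) (m : ℤ) : Set (ℕ × ℕ × ℕ × ℕ) :=
  {l | (r₂ : ℤ) * l.1 + (r₁ : ℤ) * l.2.1 + (a : ℤ) * l.2.2.1 + 2 * l.2.2.2 = m ∧
    l.1 * l.2.1 = 0 ∧ l.1 + l.2.1 + l.2.2.1 ≡ j [MOD 2]}

theorem sol_finite {a r₁ r₂ : ℕ} (ha : 0 < a) (h1 : 0 < r₁) (h2 : 0 < r₂) (j : ℕ) (m : ℤ) :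
    (sol a r₁ r₂ j m).Finite := by
  refine (Set.finite_Icc (0 : ℕ × ℕ × ℕ × ℕ) (m.toNat, m.toNat, m.toNat, m.toNat)).subset ?_
  rintro ⟨x, y, z, w⟩ ⟨h, -, -⟩
  have e1 : x ≤ r₂ * x := Nat.le_mul_of_pos_left x h2
  have e2 : y ≤ r₁ * y := Nat.le_mul_of_pos_left y h1
  have e3 : z ≤ a * z := Nat.le_mul_of_pos_left z ha
  dsimp only at h
  have h' : ((r₂ * x + r₁ * y + a * z + 2 * w : ℕ) : ℤ) = m := by push_cast; exact h
  refine ⟨zero_le, ?_⟩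
  simp only [Prod.mk_le_mk]
  refine ⟨?_, ?_, ?_, ?_⟩ <;> omega

theorem ncard_sol {a r₁ r₂ : ℕ} (ha : 0 < a) (h1 : 0 < r₁) (h2 : 0 < r₂) {j : ℕ} (hj : j ≤ 1)
    (m : ℤ) :
    (sol a r₁ r₂ j m).ncard =
      {l ∈ sol a r₁ r₂ j m | l.2.2.1 = 0}.ncard + (sol a r₁ r₂ (1 - j) (m - a)).ncard := by
  let f : ℕ × ℕ × ℕ × ℕ → ℕ × ℕ × ℕ × ℕ := fun l => (l.1, l.2.1, l.2.2.1 + 1, l.2.2.2)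
  have hf : Function.Injective f := by
    rintro ⟨x, y, z, w⟩ ⟨x', y', z', w'⟩ h
    simpa [f] using h
  have hU : sol a r₁ r₂ j m =
      {l ∈ sol a r₁ r₂ j m | l.2.2.1 = 0} ∪ f '' sol a r₁ r₂ (1 - j) (m - a) := by
    ext ⟨x, y, z, w⟩
    constructor
    · intro h
      rcases z with _ | z
      · exact Or.inl ⟨h, rfl⟩
      · obtain ⟨h, h0, hp⟩ := h
        refine Or.inr ⟨(x, y, z, w), ⟨?_, h0, ?_⟩, rfl⟩
        · push_cast at h ⊢
          linarith
        · simp only [Nat.ModEq] at hp ⊢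
          omega
    · rintro (h | ⟨⟨x', y', z', w'⟩, ⟨h, h0, hp⟩, he⟩)
      · exact h.1
      · rw [← he]
        refine ⟨?_, h0, ?_⟩
        · simp only [f]
          push_cast at h ⊢
          linarith
        · simp only [f, Nat.ModEq] at hp ⊢
          omega
  have hD : Disjoint {l ∈ sol a r₁ r₂ j m | l.2.2.1 = 0} (f '' sol a r₁ r₂ (1 - j) (m - a)) := by
    rw [Set.disjoint_left]
    rintro l ⟨-, h⟩ ⟨l', -, rfl⟩
    exact Nat.succ_ne_zero _ h
  conv_lhs => rw [hU]
  rw [Set.ncard_union_eq hD ((sol_finite ha h1 h2 j m).subset (Set.sep_subset _ _))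
    ((sol_finite ha h1 h2 _ _).image f), Set.ncard_image_of_injective _ hf]

/-- The part `l₃ = 0` is the disjoint union of two arithmetic progressions, parametrised by `t`
below `1 - j + ⌊(n + j r₂)/(2 r₂)⌋` and `⌊(n + j r₁)/(2 r₁)⌋` respectively. -/
theorem ncard_slice {a r₁ r₂ : ℕ} (h1 : 0 < r₁) (h2 : 0 < r₂) (hp1 : a % 2 = r₁ % 2)
    (hp2 : a % 2 = r₂ % 2) {j : ℕ} (hj : j = 0 ∨ j = 1) (n : ℕ) (hn : n % 2 = (j * a) % 2) :
    {l ∈ sol a r₁ r₂ j n | l.2.2.1 = 0}.ncard =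
      (1 - j + (n + j * r₂) / (2 * r₂)) + (n + j * r₁) / (2 * r₁) := by
  let f : ℕ → ℕ × ℕ × ℕ × ℕ := fun t => (2 * t + j, 0, 0, (n - r₂ * (2 * t + j)) / 2)
  let g : ℕ → ℕ × ℕ × ℕ × ℕ := fun t => (0, 2 * t + 2 - j, 0, (n - r₁ * (2 * t + 2 - j)) / 2)
  have hf : Function.Injective f := by
    intro t t' h
    simp only [f, Prod.mk.injEq] at h
    omega
  have hg : Function.Injective g := by
    intro t t' h
    simp only [g, Prod.mk.injEq] at h
    omega
  -- An entry of the right parity contributes a term of the same parity as `n`, so `l₄` is integral.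
  have par : ∀ r x : ℕ, a % 2 = r % 2 → x % 2 = j → (r * x) % 2 = n % 2 := by
    intro r x hr hx
    rw [hn, Nat.mul_mod, ← hr, hx, Nat.mul_mod j a]
    rcases hj with rfl | rfl <;> simp
  have bf : ∀ t, t < 1 - j + (n + j * r₂) / (2 * r₂) ↔ r₂ * (2 * t + j) ≤ n := by
    intro t
    rcases hj with rfl | rfl
    · rw [show t < 1 - 0 + (n + 0 * r₂) / (2 * r₂) ↔ t ≤ (n + 0 * r₂) / (2 * r₂) by omega,
        Nat.le_div_iff_mul_le (by omega)]
      constructor <;> intro h <;> nlinarith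
    · rw [show t < 1 - 1 + (n + 1 * r₂) / (2 * r₂) ↔ t + 1 ≤ (n + 1 * r₂) / (2 * r₂) by omega,
        Nat.le_div_iff_mul_le (by omega)]
      constructor <;> intro h <;> nlinarith
  have bg : ∀ t, t < (n + j * r₁) / (2 * r₁) ↔ r₁ * (2 * t + 2 - j) ≤ n := by
    intro t
    rw [← Nat.succ_le_iff, Nat.le_div_iff_mul_le (by omega)]
    rcases hj with rfl | rfl
    · rw [show 2 * t + 2 - 0 = 2 * t + 2 by omega]
      constructor <;> intro h <;> nlinarith
    · rw [show 2 * t + 2 - 1 = 2 * t + 1 by omega]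
      constructor <;> intro h <;> nlinarith
  have hU : {l ∈ sol a r₁ r₂ j n | l.2.2.1 = 0} =
      ↑((Finset.range (1 - j + (n + j * r₂) / (2 * r₂))).image f ∪
        (Finset.range ((n + j * r₁) / (2 * r₁))).image g) := by
    ext ⟨x, y, z, w⟩
    simp only [Finset.coe_union, Finset.coe_image, Finset.coe_range, Set.mem_union, Set.mem_image,
      Set.mem_Iio, bf, bg]
    constructor
    · rintro ⟨⟨h, h0, hp⟩, hz⟩
      dsimp only at h h0 hp hz
      subst hz
      have h' : r₂ * x + r₁ * y + 2 * w = n := by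
        push_cast at h
        zify
        linarith
      simp only [Nat.ModEq] at hp
      by_cases hy : y = 0
      · subst hy
        left
        have e : 2 * ((x - j) / 2) + j = x := by omega
        refine ⟨(x - j) / 2, ?_, ?_⟩
        · rw [e]; omega
        · simp only [f, e, Prod.mk.injEq, true_and]
          omega
      · have hx : x = 0 := (Nat.mul_eq_zero.mp h0).resolve_right hy
        subst hx
        right
        have e : 2 * ((y + j - 2) / 2) + 2 - j = y := by omega
        refine ⟨(y + j - 2) / 2, ?_, ?_⟩
        · rw [e]; omega
        · simp only [g, e, Prod.mk.injEq, true_and]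
          omega
    · rintro (⟨t, ht, he⟩ | ⟨t, ht, he⟩)
      · have hp := par r₂ (2 * t + j) hp2 (by omega)
        simp only [f, Prod.mk.injEq] at he
        obtain ⟨rfl, rfl, rfl, rfl⟩ := he
        refine ⟨⟨?_, by simp, by simp only [Nat.ModEq]; omega⟩, rfl⟩
        have key : r₂ * (2 * t + j) + 2 * ((n - r₂ * (2 * t + j)) / 2) = n := by omega
        zify at key
        simpa using key
      · have hp := par r₁ (2 * t + 2 - j) hp1 (by omega)
        simp only [g, Prod.mk.injEq] at he
        obtain ⟨rfl, rfl, rfl, rfl⟩ := he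
        refine ⟨⟨?_, by simp, by simp only [Nat.ModEq]; omega⟩, rfl⟩
        have key : r₁ * (2 * t + 2 - j) + 2 * ((n - r₁ * (2 * t + 2 - j)) / 2) = n := by omega
        have key' := congrArg (Nat.cast : ℕ → ℤ) key
        rw [Nat.cast_add, Nat.cast_mul, Nat.cast_mul] at key'
        simpa using key'
  have hD : Disjoint ((Finset.range (1 - j + (n + j * r₂) / (2 * r₂))).image f)
      ((Finset.range ((n + j * r₁) / (2 * r₁))).image g) := by
    rw [Finset.disjoint_left]
    intro l h h'
    obtain ⟨t, -, rfl⟩ := Finset.mem_image.mp h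
    obtain ⟨t', -, h'⟩ := Finset.mem_image.mp h'
    simp only [f, g, Prod.mk.injEq] at h'
    omega
  rw [hU, Set.ncard_coe_finset, Finset.card_union_of_disjoint hD,
    Finset.card_image_of_injective _ hf, Finset.card_image_of_injective _ hg,
    Finset.card_range, Finset.card_range]


/-- Combinatorial half of the dimension count `dim V^[j](i) = #N^[j]_{r₂−r₁}(i)`
for divisorial contractions to points of type cD/2: with `a ≡ r₁ (mod 2)`,
`k ∈ {2,4}`, `r₂ = r₁ + k` and `j ∈ {0,1}`, the count `M^[j](m)` of quadruples
`(l₁,l₂,l₃,l₄) ∈ ℤ⁴_{≥0}` with `r₂l₁ + r₁l₂ + al₃ + 2l₄ = m`, `l₁l₂ = 0` and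
`l₁ + l₂ + l₃ ≡ j (mod 2)` satisfies, for `m ≥ 0` with `m ≡ ja (mod 2)`,
`M^[j](m) − M^[1−j](m − a) = 1 − j + ⌊(m + jr₁)/(2r₁)⌋ + ⌊(m + jr₂)/(2r₂)⌋`. -/
theorem stmt_4 (a r₁ r₂ k : ℕ) (ha : 0 < a) (hr₁ : 0 < r₁)
    (hpar : a ≡ r₁ [MOD 2]) (hk : k = 2 ∨ k = 4) (hr₂ : r₂ = r₁ + k)
    (j : ℕ) (hj : j = 0 ∨ j = 1)
    (M : ℕ → ℤ → ℕ)
    (hM : ∀ (j' : ℕ) (m : ℤ), M j' m =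
      Set.ncard {l : ℕ × ℕ × ℕ × ℕ |
        (r₂ : ℤ) * l.1 + (r₁ : ℤ) * l.2.1 + (a : ℤ) * l.2.2.1 + 2 * l.2.2.2 = m ∧
        l.1 * l.2.1 = 0 ∧ l.1 + l.2.1 + l.2.2.1 ≡ j' [MOD 2]}) :
    ∀ m : ℤ, 0 ≤ m → m ≡ (j : ℤ) * (a : ℤ) [ZMOD 2] →
      (M j m : ℤ) - (M (1 - j) (m - a) : ℤ) =
        1 - (j : ℤ) + (m + (j : ℤ) * (r₁ : ℤ)) / (2 * (r₁ : ℤ))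
          + (m + (j : ℤ) * (r₂ : ℤ)) / (2 * (r₂ : ℤ)) := by
  intro m hm hmod
  lift m to ℕ using hm
  have hmod' : m % 2 = (j * a) % 2 := by
    have : (m : ℤ) ≡ ((j * a : ℕ) : ℤ) [ZMOD ((2 : ℕ) : ℤ)] := by push_cast; exact hmod
    exact (Int.natCast_modEq_iff).mp this
  have h2 : 0 < r₂ := by omega
  have hp1 : a % 2 = r₁ % 2 := hpar
  have hs := ncard_sol ha hr₁ h2 (show j ≤ 1 by omega) (m : ℤ)
  rw [ncard_slice hr₁ h2 hp1 (by omega) hj m hmod'] at hs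
  have e1 : M j m = (sol a r₁ r₂ j m).ncard := hM j m
  have e2 : M (1 - j) (m - a) = (sol a r₁ r₂ (1 - j) (m - a)).ncard := hM _ _
  rw [e1, e2, hs]
  rw [Nat.cast_add, Nat.cast_add, Nat.cast_add, Nat.cast_sub (show j ≤ 1 by omega)]
  push_cast
  ring
end

section
/- Let a and r₁ be positive integers and set r₂ := r₁ + 4. For an integer m, let N(m) denote the number of quadruples (l₁, l₂, l₃, l₄) of non-negative integers with r₂·l₁ + r₁·l₂ + a·l₃ + 2·l₄ = m and l₁·l₂ = 0, and let Ñ(m) denote the number of quadruples (l₁, l₂, l₃, l₄) of non-negative integers with (r₁+2)·l₁ + r₁·l₂ + a·l₃ + 2·l₄ = m (no vanishing condition; both counts are 0 for m < 0). Then for every integer m with 0 ≤ m < r₁ + r₂: N(m) = Ñ(m) + Ñ(m − r₂) − Ñ(m + 2 − r₂). -/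
/-!
Both counts are split according to whether `l₁ = 0`. The part `l₁ = 0` is the same set for `N(m)`
and `Nt(m)`. Lowering `l₁` by one identifies the part `l₁ ≥ 1` of `Nt(m)` with all the solutions
counted by `Nt(m + 2 - r₂)`, as `r₁ + 2 = r₂ - 2`. In the part `l₁ ≥ 1` of `N(m)` one has `l₂ = 0`,
and `l₁ = 1` because `m < 2 r₂`; lowering `l₁` identifies it with the solutions counted by
`Nt(m - r₂)`, which all have `l₁ = l₂ = 0` because `m - r₂ < r₁`. Hence
`N(m) - Nt(m - r₂) = Nt(m) - Nt(m + 2 - r₂)`.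
-/

/-- The solutions counted by `Nt m`, with `r = r₁`. -/
def ntSet (a r : ℕ) (m : ℤ) : Set (ℕ × ℕ × ℕ × ℕ) :=
  {l | ((r : ℤ) + 2) * l.1 + (r : ℤ) * l.2.1 + (a : ℤ) * l.2.2.1 + 2 * l.2.2.2 = m}

/-- The solutions with `l₁ = 0`, which contribute equally to `N m` and `Nt m`. -/
def zeroSet (a r : ℕ) (m : ℤ) : Set (ℕ × ℕ × ℕ × ℕ) :=
  {l | l.1 = 0 ∧ (r : ℤ) * l.2.1 + (a : ℤ) * l.2.2.1 + 2 * l.2.2.2 = m}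

/-- The map raising `l₁` by one. -/
def shift (l : ℕ × ℕ × ℕ × ℕ) : ℕ × ℕ × ℕ × ℕ := (l.1 + 1, l.2)

lemma shift_injective : Function.Injective shift := by
  rintro ⟨a, b⟩ ⟨c, d⟩ h
  simpa [shift] using h

lemma ntSet_finite {a r : ℕ} (ha : 0 < a) (hr : 0 < r) (m : ℤ) : (ntSet a r m).Finite := by
  -- all coefficients are at least one, so each coordinate is at most `m`
  refine (Set.finite_Iic (m.toNat, m.toNat, m.toNat, m.toNat)).subset ?_
  rintro ⟨w, x, y, z⟩ h
  simp only [ntSet, Set.mem_ofPred_eq] at h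
  have hx : (x : ℤ) ≤ r * x := le_mul_of_one_le_left (by positivity) (by exact_mod_cast hr)
  have hy : (y : ℤ) ≤ a * y := le_mul_of_one_le_left (by positivity) (by exact_mod_cast ha)
  have hw : (0 : ℤ) ≤ r * w := by positivity
  simp only [Set.mem_Iic, Prod.mk_le_mk]
  rw [add_mul] at h
  omega

/-- The two pieces are disjoint since shifting makes `l₁` positive; both are finite, so that
`Set.ncard` is a genuine count. -/
lemma ncard_zeroSet_union {a r : ℕ} (ha : 0 < a) (hr : 0 < r) (m n : ℤ) :
    (zeroSet a r m ∪ shift '' ntSet a r n).ncard =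
      (zeroSet a r m).ncard + (ntSet a r n).ncard := by
  have hd : Disjoint (zeroSet a r m) (shift '' ntSet a r n) := by
    rw [Set.disjoint_left]
    rintro _ ⟨h, -⟩ ⟨l, -, rfl⟩
    simp [shift] at h
  have hf : (zeroSet a r m).Finite := by
    refine (ntSet_finite ha hr m).subset ?_
    rintro ⟨w, x, y, z⟩ ⟨h, h'⟩
    simp only at h h'
    simp [ntSet, h, h']
  rw [Set.ncard_union_eq hd hf ((ntSet_finite ha hr n).image _),
    Set.ncard_image_of_injective _ shift_injective]

lemma ntSet_eq (a r : ℕ) (m : ℤ) :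
    ntSet a r m = zeroSet a r m ∪ shift '' ntSet a r (m - (r + 2)) := by
  ext ⟨w, x, y, z⟩
  simp only [ntSet, zeroSet, shift, Set.mem_union, Set.mem_image, Set.mem_ofPred_eq]
  constructor
  · intro h
    rcases w with _ | w
    · left
      simpa using h
    · refine Or.inr ⟨(w, x, y, z), ?_, rfl⟩
      push_cast at h
      linarith
  · rintro (⟨rfl, h⟩ | ⟨⟨w, x, y, z⟩, h, h'⟩)
    · simpa using h
    · simp only [Prod.mk.injEq] at h'
      obtain ⟨rfl, rfl, rfl, rfl⟩ := h'
      push_cast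
      linarith

/-- In the range `m < r₁ + r₂`, the solutions counted by `N m` with `l₁ ≥ 1` are exactly the
shifts of those counted by `Nt (m - r₂)`. -/
lemma nSet_eq (a r : ℕ) (m : ℤ) (hm : m < r + (r + 4)) :
    {l : ℕ × ℕ × ℕ × ℕ | ((r : ℤ) + 4) * l.1 + (r : ℤ) * l.2.1 + (a : ℤ) * l.2.2.1
        + 2 * l.2.2.2 = m ∧ l.1 * l.2.1 = 0} =
      zeroSet a r m ∪ shift '' ntSet a r (m - (r + 4)) := by
  ext ⟨w, x, y, z⟩
  simp only [ntSet, zeroSet, shift, Set.mem_union, Set.mem_image, Set.mem_ofPred_eq]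
  have hy : (0 : ℤ) ≤ a * y := by positivity
  constructor
  · rintro ⟨h, h0⟩
    rcases w with _ | w
    · left
      simpa using h
    · obtain rfl : x = 0 := by simpa using h0
      rcases w with _ | w
      · refine Or.inr ⟨(0, 0, y, z), ?_, rfl⟩
        push_cast at h ⊢
        linarith
      -- `l₁ ≥ 2` is impossible because `m < 2 r₂`
      · have hw : (0 : ℤ) ≤ (r + 4) * w := by positivity
        push_cast at h
        linarith
  · rintro (⟨rfl, h⟩ | ⟨⟨w', x', y', z'⟩, h, h'⟩)
    · simpa using h
    · simp only [Prod.mk.injEq] at h'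
      obtain ⟨rfl, rfl, rfl, rfl⟩ := h'
      simp only at h
      -- both `l₁` and `l₂` vanish here because `m - r₂ < r₁`
      obtain rfl : w' = 0 := by
        rcases w' with _ | w'
        · rfl
        · have h1 : (0 : ℤ) ≤ (r + 2) * w' := by positivity
          have h2 : (0 : ℤ) ≤ r * x' := by positivity
          push_cast at h
          linarith
      obtain rfl : x' = 0 := by
        rcases x' with _ | x'
        · rfl
        · have h2 : (0 : ℤ) ≤ r * x' := by positivity
          push_cast at h
          linarith
      push_cast at h ⊢
      exact ⟨by linarith, by simp⟩

/-- The identity `#N₄(i) = #Nt₂(i) + #Nt₂(i − r₂/2) − #Nt₂(i + 1 − r₂/2)` (with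
`m = 2i`) used in the Lemma on monomial bases of the graded pieces `V(i)` for a
divisorial contraction to a cD/2 point with local indices `r₁` and `r₂ = r₁ + 4`:
for `0 ≤ m < r₁ + r₂`, `N(m) = Nt(m) + Nt(m − r₂) − Nt(m + 2 − r₂)`. -/
theorem stmt_5 (a r₁ r₂ : ℕ) (ha : 0 < a) (hr₁ : 0 < r₁) (hr₂ : r₂ = r₁ + 4)
    (N Nt : ℤ → ℕ)
    (hN : ∀ m : ℤ, N m =
      Set.ncard {l : ℕ × ℕ × ℕ × ℕ |
        (r₂ : ℤ) * l.1 + (r₁ : ℤ) * l.2.1 + (a : ℤ) * l.2.2.1 + 2 * l.2.2.2 = m ∧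
        l.1 * l.2.1 = 0})
    (hNt : ∀ m : ℤ, Nt m =
      Set.ncard {l : ℕ × ℕ × ℕ × ℕ |
        ((r₁ : ℤ) + 2) * l.1 + (r₁ : ℤ) * l.2.1 + (a : ℤ) * l.2.2.1 + 2 * l.2.2.2 = m}) :
    ∀ m : ℤ, 0 ≤ m → m < (r₁ : ℤ) + (r₂ : ℤ) →
      (N m : ℤ) = (Nt m : ℤ) + (Nt (m - r₂) : ℤ) - (Nt (m + 2 - r₂) : ℤ) := by
  subst hr₂
  intro m _ hm
  have h1 : N m = (zeroSet a r₁ m).ncard + Nt (m - ((r₁ + 4 : ℕ) : ℤ)) := by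
    have e := nSet_eq a r₁ m (by push_cast at hm; exact hm)
    rw [hN, hNt]
    push_cast
    rw [e, ncard_zeroSet_union ha hr₁]
    rfl
  have h2 : Nt m = (zeroSet a r₁ m).ncard + Nt (m + 2 - ((r₁ + 4 : ℕ) : ℤ)) := by
    have e : m + 2 - ((r₁ + 4 : ℕ) : ℤ) = m - (r₁ + 2) := by push_cast; ring
    rw [e, hNt, hNt]
    change (ntSet a r₁ m).ncard = _ + (ntSet a r₁ (m - (r₁ + 2))).ncard
    rw [← ncard_zeroSet_union ha hr₁, ← ntSet_eq]
  rw [h1, h2]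
  push_cast
  ring
end

section
/- Let a, s, k, r₁, r₂ be positive integers such that r₁ + r₂ = s·a·k, r₂ = r₁ + 2k, r₁ divides a·s − 2, and r₂ divides a·s + 2. Then either k = 1 and a·s = 2·r₁ + 2, or k = 2 and a·s = r₁ + 2. -/
/-- Step 3 of the proof of the general elephant theorem for contractions of
type No 15′′ with `s_C(−1,0) ≠ 0`: if `r₁ + r₂ = s·a·k`, `r₂ = r₁ + 2k`,
`r₁ ∣ a·s − 2` and `r₂ ∣ a·s + 2`, then either `k = 1` and `a·s = 2r₁ + 2`,
or `k = 2` and `a·s = r₁ + 2`. -/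
theorem stmt_6 (a s k r₁ r₂ : ℤ)
    (ha : 0 < a) (hs : 0 < s) (hk : 0 < k) (hr₁ : 0 < r₁) (hr₂ : 0 < r₂)
    (e1 : r₁ + r₂ = s * a * k)
    (e2 : r₂ = r₁ + 2 * k)
    (d1 : r₁ ∣ a * s - 2)
    (d2 : r₂ ∣ a * s + 2) :
    (k = 1 ∧ a * s = 2 * r₁ + 2) ∨ (k = 2 ∧ a * s = r₁ + 2) := by
  obtain ⟨c, hc⟩ := d1
  -- Substituting `r₂` turns the cycle equality into `2 r₁ = k (a s - 2)`; with
  -- `a s - 2 = r₁ c` this leaves `k c = 2`, so `k` is `1` or `2`.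
  have h : k * c = 2 := by
    apply mul_left_cancel₀ hr₁.ne'
    linear_combination e2 - e1 - k * hc
  have hk2 : k ≤ 2 := Int.le_of_dvd (by norm_num) ⟨c, h.symm⟩
  obtain rfl | rfl : k = 1 ∨ k = 2 := by omega
  · left
    obtain rfl : c = 2 := by omega
    exact ⟨rfl, by linarith⟩
  · right
    obtain rfl : c = 1 := by omega
    exact ⟨rfl, by linarith⟩
end

section
/- Let a, s, r₁, r₂ be positive integers with a odd, a ≥ 3, s ≥ 2, and r₂·(a·s − 2) = r₁·(a·s + 2). If r₁ divides 2·r₂, then r₁ is even or r₂ is even. More precisely, necessarily either (a, s) = (3, 2) with r₂ = 2·r₁, or (a, s) = (5, 2) with 2·r₂ = 3·r₁. -/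
/-!
Write `2 * r₂ = r₁ * k` and `a * s = M + 2`. Cancelling `r₁` from the relation turns it into
`k * M = 2 * (M + 4)`, that is `(k - 2) * M = 8`. Since `M ≥ 4`, either `M = 4` and `k = 4`, or
`M = 8` and `k = 3`; then `a * s` is `6` or `10`, and `a` odd with `a ≥ 3`, `s ≥ 2` leaves only
`(3, 2)` and `(5, 2)`. The parity claim follows from `r₂ = 2 * r₁`, respectively `2 * r₂ = 3 * r₁`.
-/

/-- Arithmetic core of Corollary 4.16: with `a` odd, `a ≥ 3`, `s ≥ 2` and
`r₂(as − 2) = r₁(as + 2)`, if `r₁ ∣ 2r₂` then `r₁` or `r₂` is even; more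
precisely either `(a,s) = (3,2)` with `r₂ = 2r₁`, or `(a,s) = (5,2)` with
`2r₂ = 3r₁`. -/
theorem stmt_8 (a s r₁ r₂ : ℕ)
    (ha3 : 3 ≤ a) (haodd : Odd a) (hs2 : 2 ≤ s)
    (hr₁ : 0 < r₁) (hr₂ : 0 < r₂)
    (he : r₂ * (a * s - 2) = r₁ * (a * s + 2))
    (hdvd : r₁ ∣ 2 * r₂) :
    (Even r₁ ∨ Even r₂) ∧
    ((a = 3 ∧ s = 2 ∧ r₂ = 2 * r₁) ∨ (a = 5 ∧ s = 2 ∧ 2 * r₂ = 3 * r₁)) := by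
  obtain ⟨k, hk⟩ := hdvd
  have hN : 6 ≤ a * s := Nat.mul_le_mul ha3 hs2
  obtain ⟨M, hM⟩ : ∃ M, a * s = M + 2 := ⟨a * s - 2, by omega⟩
  rw [hM, Nat.add_sub_cancel] at he
  have hkM : k * M = 2 * (M + 4) := by
    apply Nat.eq_of_mul_eq_mul_left hr₁
    linear_combination 2 * he - M * hk
  have hM4 : 4 ≤ M := by omega
  have hk3 : 3 ≤ k := by
    by_contra! h
    nlinarith
  obtain ⟨j, rfl⟩ : ∃ j, k = j + 2 := ⟨k - 2, by omega⟩
  have hj : j * M = 8 := by linarith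
  have hj2 : j ≤ 2 := by nlinarith
  have hj1 : 1 ≤ j := by omega
  obtain ⟨b, rfl⟩ := haodd
  have hb : 1 ≤ b := by omega
  interval_cases j
  · have hM8 : M = 8 := by omega
    subst hM8
    have hb2 : b ≤ 2 := by nlinarith
    interval_cases b
    · omega
    · refine ⟨Or.inl ?_, Or.inr ⟨rfl, by omega, by omega⟩⟩
      rw [Nat.even_iff]
      omega
  · have hM4' : M = 4 := by omega
    subst hM4'
    have hb1 : b = 1 := by nlinarith
    subst hb1
    refine ⟨Or.inr ?_, Or.inl ⟨rfl, by omega, by omega⟩⟩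
    rw [Nat.even_iff]
    omega
end
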